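/- arXiv:2510.16796 — 3 statements merged into one kernel-verified Lean document; each statement's English description precedes it below -/
import Mathlib

section
/- Let A be a Noetherian ring, M a finitely generated A-module fitting in a short exact sequence 0 → M → L → N → 0 with L finite free and N a submodule of a finite free module. Then the natural map M → M^∨∨ is injective, and if moreover A satisfies G₀ + S₁ it is an isomorphism, i.e., M is reflexive. -/
open CategoryTheory IsLocalRing TensorProduct

universe u

/-- The Ext group `Ext^n_R(M, N)` as a module over `R`. -/
noncomputable def ExtGroup (R : Type u) [CommRing R] (M N : Type u)
    [AddCommGroup M] [Module R M] [AddCommGroup N] [Module R N] (n : ℕ) : ModuleCat.{u} R :=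
  ((Ext R (ModuleCat.{u} R) n).obj (Opposite.op (ModuleCat.of R M))).obj (ModuleCat.of R N)

/-- A Noetherian local ring `R` of dimension `n` is Gorenstein if
`Ext^i(k, R) = 0` for `i < n` and `Ext^n(k, R) ≅ k`. -/
def IsGorensteinLocalRing (R : Type u) [CommRing R] [IsLocalRing R] : Prop :=
  ∃ n : ℕ, ringKrullDim R = n ∧
    (∀ i : ℕ, i < n → Subsingleton (ExtGroup R (ResidueField R) R i)) ∧
    Nonempty (ExtGroup R (ResidueField R) R n ≅ ModuleCat.of R (ResidueField R))

/-- The depth of a module `M` over a local ring `R`, defined (following Rees) as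
the least `i` such that `Ext^i(k, M) ≠ 0`, as an extended natural number. -/
noncomputable def moduleDepth (R : Type u) [CommRing R] [IsLocalRing R]
    (M : Type u) [AddCommGroup M] [Module R M] : ℕ∞ :=
  sInf {n : ℕ∞ | ∃ i : ℕ, n = i ∧ Nontrivial (ExtGroup R (ResidueField R) M i)}

/-- `R` is Gorenstein in codimension `r`: every localization of dimension at most `r`
is a Gorenstein local ring. -/
def GorensteinInCodim (R : Type u) [CommRing R] (r : ℕ) : Prop :=
  ∀ p : PrimeSpectrum R, ringKrullDim (Localization.AtPrime p.asIdeal) ≤ (r : ℕ) →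
    IsGorensteinLocalRing (Localization.AtPrime p.asIdeal)

/-- Serre's condition `Sᵣ` for the ring `R`:
`depth R_p ≥ min (r, dim R_p)` for every prime `p`. -/
def SerreCondS (R : Type u) [CommRing R] (r : ℕ) : Prop :=
  ∀ p : PrimeSpectrum R,
    min (r : WithBot ℕ∞) (ringKrullDim (Localization.AtPrime p.asIdeal)) ≤
      (moduleDepth (Localization.AtPrime p.asIdeal) (Localization.AtPrime p.asIdeal) : WithBot ℕ∞)

/-!
The composite `M → L → N` dualizes twice to `M^∨∨ → L^∨∨ → N^∨∨`. Since `L` is reflexive and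
`N → N^∨∨` is injective, a diagram chase shows that `M → M^∨∨` is surjective as soon as
`M^∨∨ → L^∨∨` is injective, i.e. as soon as the cokernel `C` of `L^∨ → M^∨` has no nonzero
functional. An associated prime `p` of the image of such a functional would be an associated prime
of `A`. By `S₁` the ring `A_p` has dimension zero, so by `G₀` it is Gorenstein of dimension zero,
hence injective as a module over itself; therefore `C_p = 0`, which is absurd.
-/

open Limits in
theorem preservesFiniteLimits_linearYoneda_obj (R : Type*) [Ring R] {C : Type*} [Category* C]
    [Preadditive C] [Linear R C] (Y : C) :
    PreservesFiniteLimits ((linearYoneda R C).obj Y) := by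
  have : PreservesFiniteLimits ((linearYoneda R C).obj Y ⋙ forget (ModuleCat R)) :=
    inferInstanceAs (PreservesFiniteLimits (yoneda.obj Y))
  exact preservesFiniteLimits_of_reflects_of_preserves _ (forget (ModuleCat R))

open Limits in
/-- The identification of `Ext⁰(M, N)` with `Hom(M, N)`. -/
noncomputable def ExtGroup.zeroLinearEquiv (R : Type u) [CommRing R] (M N : Type u)
    [AddCommGroup M] [Module R M] [AddCommGroup N] [Module R N] :
    ExtGroup R M N 0 ≃ₗ[R] (M →ₗ[R] N) :=
  let hom := (linearYoneda R (ModuleCat.{u} R)).obj (ModuleCat.of R N)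
  have := preservesFiniteLimits_linearYoneda_obj R (ModuleCat.of R N)
  have := preservesFiniteColimits_rightOp hom
  (hom.rightOp.leftDerivedZeroIsoSelf.app (ModuleCat.of R M)).unop.symm.toLinearEquiv.trans
    ModuleCat.homLinearEquiv

section Length

variable {R : Type*} [CommRing R] {V : Type*} [AddCommGroup V] [Module R V]

theorem length_linearMap_eq_add_of_exact {K X Q : Type*} [AddCommGroup K] [Module R K]
    [AddCommGroup X] [Module R X] [AddCommGroup Q] [Module R Q] {f : K →ₗ[R] X} {g : X →ₗ[R] Q}
    (hfg : Function.Exact f g) (hg : Function.Surjective g) :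
    Module.length R (X →ₗ[R] V) =
      Module.length R (Q →ₗ[R] V) + Module.length R (f.lcomp R V).range := by
  refine Module.length_eq_add_of_exact (g.lcomp R V) (f.lcomp R V).rangeRestrict
    (LinearMap.lcomp_injective_of_surjective g hg) (f.lcomp R V).surjective_rangeRestrict fun x ↦ ?_
  rw [← LinearMap.exact_lcomp_of_exact_of_surjective V hfg hg x, ← Subtype.coe_inj]
  rfl

variable [IsLocalRing R]

theorem length_linearMap_le_mul_length_socle {X : Type*} [AddCommGroup X] [Module R X]
    (hX : IsFiniteLength R X) :
    Module.length R (X →ₗ[R] V) ≤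
      Module.length R X * Module.length R (ResidueField R →ₗ[R] V) := by
  induction hX with
  | of_subsingleton => simp
  | @of_simple_quotient X _ _ N _ _ ih =>
    obtain ⟨m, hm, ⟨e⟩⟩ := isSimpleModule_iff_quot_maximal.mp ‹IsSimpleModule R (X ⧸ N)›
    obtain rfl := eq_maximalIdeal hm
    have hN := LinearMap.exact_subtype_mkQ N
    calc Module.length R (X →ₗ[R] V)
        = Module.length R (X ⧸ N →ₗ[R] V) + Module.length R (N.subtype.lcomp R V).range :=
          length_linearMap_eq_add_of_exact hN N.mkQ_surjective
      _ ≤ Module.length R (ResidueField R →ₗ[R] V) +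
            Module.length R N * Module.length R (ResidueField R →ₗ[R] V) :=
          add_le_add (e.congrLeft V R).length_eq.le
            ((Module.length_le_of_injective _ (Submodule.subtype_injective _)).trans ih)
      _ = Module.length R X * Module.length R (ResidueField R →ₗ[R] V) := by
          rw [Module.length_eq_add_of_exact _ _ N.subtype_injective N.mkQ_surjective hN,
            Module.length_eq_one R (X ⧸ N), add_mul, one_mul, add_comm]

theorem length_linearMap_le_length (hV : Module.length R (ResidueField R →ₗ[R] V) ≤ 1)
    {X : Type*} [AddCommGroup X] [Module R X] (hX : IsFiniteLength R X) :
    Module.length R (X →ₗ[R] V) ≤ Module.length R X :=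
  (length_linearMap_le_mul_length_socle hX).trans (mul_le_of_le_one_right' hV)

-- Dualizing `0 → I → R → R ⧸ I → 0` into `V` lengthens neither `I` nor `R ⧸ I` and does not shorten
-- `R`, so the restriction `(R →ₗ[R] V) → (I →ₗ[R] V)` has an image as long as its codomain.
theorem baer_of_length_socle_le_one [IsArtinianRing R]
    (hV : Module.length R (ResidueField R →ₗ[R] V) ≤ 1)
    (hRV : Module.length R R ≤ Module.length R V) : Module.Baer R V := by
  refine Module.Baer.iff_surjective.mpr fun I ↦ ?_
  have hI : Module.length R (I →ₗ[R] V) ≤ Module.length R I :=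
    length_linearMap_le_length hV (Module.length_ne_top_iff.mp Module.length_ne_top)
  have hQ : Module.length R (R ⧸ I →ₗ[R] V) ≤ Module.length R (R ⧸ I) :=
    length_linearMap_le_length hV (Module.length_ne_top_iff.mp Module.length_ne_top)
  have hexact := LinearMap.exact_subtype_mkQ I
  have hrange : Module.length R I ≤ Module.length R (I.subtype.lcomp R V).range := by
    refine (ENat.add_le_add_iff_left (Module.length_ne_top (R := R) (M := R ⧸ I))).mp ?_
    calc Module.length R (R ⧸ I) + Module.length R I
        = Module.length R R := by
          rw [add_comm,
            ← Module.length_eq_add_of_exact _ _ I.subtype_injective I.mkQ_surjective hexact]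
      _ ≤ Module.length R (R →ₗ[R] V) :=
          hRV.trans (LinearMap.ringLmapEquivSelf R R V).length_eq.ge
      _ = Module.length R (R ⧸ I →ₗ[R] V) + Module.length R (I.subtype.lcomp R V).range :=
          length_linearMap_eq_add_of_exact hexact I.mkQ_surjective
      _ ≤ Module.length R (R ⧸ I) + Module.length R (I.subtype.lcomp R V).range :=
          add_le_add_left hQ _
  obtain ⟨_, _⟩ := isFiniteLength_iff_isNoetherian_isArtinian.mp <|
    Module.length_ne_top_iff.mp (ne_top_of_le_ne_top Module.length_ne_top hI)
  rw [← LinearMap.range_eq_top]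
  by_contra h
  exact (Submodule.length_lt h).not_ge (hI.trans hrange)

end Length

section Local

variable {R : Type u} [CommRing R] [IsLocalRing R] [IsNoetherianRing R]

theorem IsGorensteinLocalRing.baer_self (hR : IsGorensteinLocalRing R)
    (hdim : ringKrullDim R ≤ 0) : Module.Baer R R := by
  obtain ⟨n, hn, -, ⟨e⟩⟩ := hR
  obtain rfl : n = 0 := Nat.le_zero.mp (by exact_mod_cast hn ▸ hdim)
  have : IsArtinianRing R := isArtinianRing_iff_isNoetherianRing_krullDimLE_zero.mpr
    ⟨inferInstance, Ring.krullDimLE_iff.mpr hdim⟩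
  have : IsSimpleModule R (ResidueField R) :=
    isSimpleModule_iff_isCoatom.mpr (maximalIdeal.isMaximal R).out
  have hsocle : Module.length R (ResidueField R →ₗ[R] R) = 1 :=
    ((ExtGroup.zeroLinearEquiv R _ R).symm.trans e.toLinearEquiv).length_eq.trans
      (Module.length_eq_one R (ResidueField R))
  exact baer_of_length_socle_le_one hsocle.le le_rfl

theorem moduleDepth_eq_zero_of_isAssociatedPrime {M : Type u} [AddCommGroup M] [Module R M]
    (hM : IsAssociatedPrime (maximalIdeal R) M) : moduleDepth R M = 0 := by
  obtain ⟨-, (f : ResidueField R →ₗ[R] M), hf⟩ :=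
    (isAssociatedPrime_iff_exists_injective_linearMap _ M).mp hM
  have : Nontrivial (ResidueField R →ₗ[R] M) :=
    nontrivial_of_ne f 0 fun h ↦ one_ne_zero (α := ResidueField R) (hf (by rw [h]; rfl))
  exact nonpos_iff_eq_zero.mp
    (sInf_le ⟨0, rfl, (ExtGroup.zeroLinearEquiv R _ M).toEquiv.nontrivial⟩)

end Local

theorem SerreCondS.ringKrullDim_localization_le_zero {A : Type u} [CommRing A] [IsNoetherianRing A]
    (hA : SerreCondS A 1) {p : Ideal A} [hp : p.IsPrime] (hpA : IsAssociatedPrime p A) :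
    ringKrullDim (Localization.AtPrime p) ≤ 0 := by
  have hmax : maximalIdeal (Localization.AtPrime p) ∈
      associatedPrimes (Localization.AtPrime p) (Localization.AtPrime p) :=
    Module.associatedPrimes.mem_associatedPrimes_of_comap_mem_associatedPrimes_of_isLocalizedModule
      p.primeCompl (Algebra.linearMap A (Localization.AtPrime p)) _
      (by rwa [← Ideal.under_def, Localization.AtPrime.under_maximalIdeal])
  have hdepth := hA ⟨p, hp⟩
  rw [moduleDepth_eq_zero_of_isAssociatedPrime hmax] at hdepth
  exact (min_le_iff.mp hdepth).resolve_left (by norm_num)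

section Extension

theorem baer_of_flat {A B Q : Type*} [CommRing A] [CommRing B] [Algebra A B] [Module.Flat A B]
    [AddCommGroup Q] [Module A Q] [Module B Q] [IsScalarTower A B Q] (hQ : Module.Baer B Q) :
    Module.Baer A Q := fun I g ↦ by
  obtain ⟨ν, hν⟩ := hQ.extension_property (I.subtype.baseChange B)
    (Module.Flat.lTensor_preserves_injective_linearMap _ I.subtype_injective)
    (g.liftBaseChange B)
  refine ⟨ν.restrictScalars A ∘ₗ TensorProduct.mk A B A 1, fun x hx ↦ ?_⟩
  simpa using congr($hν (1 ⊗ₜ[A] ⟨x, hx⟩))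

variable {A M L V : Type*} [CommRing A] [AddCommGroup M] [Module A M] [AddCommGroup L] [Module A L]
  [AddCommGroup V] [Module A V]

theorem exists_smul_mem_range_lcomp_of_baer (S : Submonoid A) {V' : Type*} [AddCommGroup V']
    [Module A V'] (i : V →ₗ[A] V') [IsLocalizedModule S i] (hV' : Module.Baer A V')
    [Module.Finite A M] [Module.FinitePresentation A L] {f : M →ₗ[A] L}
    (hf : Function.Injective f) (l : M →ₗ[A] V) : ∃ s ∈ S, s • l ∈ (f.lcomp A V).range := by
  obtain ⟨ν, hν⟩ := hV'.extension_property f hf (i ∘ₗ l)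
  obtain ⟨μ, s, hμ⟩ := Module.FinitePresentation.exists_lift_of_isLocalizedModule S i ν
  have hμf : i ∘ₗ (s • l) = i ∘ₗ μ ∘ₗ f := by
    rw [LinearMap.comp_smul, ← hν, ← LinearMap.comp_assoc, hμ, LinearMap.smul_comp]
  obtain ⟨t, ht⟩ := Module.Finite.exists_smul_of_comp_eq_of_isLocalizedModule S i _ _ hμf
  exact ⟨t * s, (t * s).2, t • μ, by rw [mul_smul]; exact ht.symm⟩

theorem lcomp_injective_of_forall_isAssociatedPrime [IsNoetherianRing A] {u : M →ₗ[A] L}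
    (hu : ∀ p : Ideal A, IsAssociatedPrime p V → ∀ y : L, ∃ s ∉ p, s • y ∈ u.range) :
    Function.Injective (u.lcomp A V) := by
  refine (injective_iff_map_eq_zero _).mpr fun φ hφ ↦ LinearMap.ext fun y ↦ ?_
  by_contra hy
  obtain ⟨p, hp, hle⟩ := exists_le_isAssociatedPrime_of_isNoetherianRing A (φ y) hy
  obtain ⟨s, hs, x, hx⟩ := hu p hp y
  have hsy : s • φ y = 0 := by rw [← map_smul, ← hx]; exact congr($hφ x)
  exact hs (hle (Submodule.mem_colon_singleton.mpr hsy))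

end Extension

theorem GorensteinInCodim.dualMap_dualMap_injective {A : Type u} [CommRing A] [IsNoetherianRing A]
    (hG : GorensteinInCodim A 0) (hS : SerreCondS A 1) {M L : Type*} [AddCommGroup M] [Module A M]
    [Module.Finite A M] [AddCommGroup L] [Module A L] [Module.Finite A L] {f : M →ₗ[A] L}
    (hf : Function.Injective f) : Function.Injective f.dualMap.dualMap := by
  refine lcomp_injective_of_forall_isAssociatedPrime fun p hpA l ↦ ?_
  have hp : p.IsPrime := hpA.isPrime
  have hdim := hS.ringKrullDim_localization_le_zero hpA
  have hbaer : Module.Baer A (Localization.AtPrime p) :=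
    baer_of_flat ((hG ⟨p, hp⟩ hdim).baer_self hdim)
  have : Module.FinitePresentation A L := Module.finitePresentation_of_finite A L
  exact exists_smul_mem_range_lcomp_of_baer p.primeCompl
    (Algebra.linearMap A (Localization.AtPrime p)) hbaer hf l

section Evaluation

open Module.Dual

variable {A M L N : Type*} [CommSemiring A] [AddCommMonoid M] [Module A M] [AddCommMonoid L]
  [Module A L] [AddCommMonoid N] [Module A N] {f : M →ₗ[A] L}

theorem dual_eval_injective_of_injective (hf : Function.Injective f)
    (hL : Function.Injective (eval A L)) : Function.Injective (eval A M) := by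
  have hcomp : Function.Injective (f.dualMap.dualMap ∘ₗ eval A M) := by
    rw [eval_naturality]
    exact hL.comp hf
  exact Function.Injective.of_comp (f := f.dualMap.dualMap) hcomp

theorem dual_eval_surjective_of_exact {g : L →ₗ[A] N} (hfg : Function.Exact f g)
    (hf : Function.Injective f.dualMap.dualMap) (hL : Function.Surjective (eval A L))
    (hN : Function.Injective (eval A N)) : Function.Surjective (eval A M) := fun φ ↦ by
  obtain ⟨x, hx⟩ := hL (f.dualMap.dualMap φ)
  have hgx : g x = 0 := hN <| LinearMap.ext fun μ ↦ calc
    μ (g x) = φ ((μ ∘ₗ g) ∘ₗ f) := congr($hx (μ ∘ₗ g))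
    _ = eval A N 0 μ := by simp [LinearMap.comp_assoc, hfg.linearMap_comp_eq_zero]
  obtain ⟨m, rfl⟩ := (hfg x).mp hgx
  exact ⟨m, hf (congr($(eval_naturality f) m).trans hx)⟩

end Evaluation

theorem reflexive_of_ses_into_free_general {A : Type u} [CommRing A] [IsNoetherianRing A]
    {M L N : Type*} [AddCommGroup M] [Module A M] [AddCommGroup L] [Module A L]
    [Module.Finite A L] [Module.IsReflexive A L] [AddCommGroup N] [Module A N]
    {f : M →ₗ[A] L} {g : L →ₗ[A] N} (hf : Function.Injective f) (hfg : Function.Exact f g)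
    (hN : Function.Injective (Module.Dual.eval A N)) :
    Function.Injective (Module.Dual.eval A M) ∧
      (GorensteinInCodim A 0 → SerreCondS A 1 →
        Function.Bijective (Module.Dual.eval A M)) := by
  have hL := Module.bijective_dual_eval A L
  have hM := dual_eval_injective_of_injective hf hL.injective
  have : Module.Finite A M := Module.Finite.of_injective f hf
  exact ⟨hM, fun hG hS ↦ ⟨hM, dual_eval_surjective_of_exact hfg
    (hG.dualMap_dualMap_injective hS hf) hL.surjective hN⟩⟩

/-- If a finitely generated module `M` over a Noetherian ring `A` fits into a short
exact sequence `0 → M → L → N → 0` with `L` finite free and `N` a submodule of a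
finite free module, then the evaluation map `M → M^∨∨` is injective; if moreover `A`
satisfies `G₀ + S₁`, it is an isomorphism, i.e. `M` is reflexive. -/
theorem reflexive_of_ses_into_free
    (A : Type u) [CommRing A] [IsNoetherianRing A]
    (M : Type u) [AddCommGroup M] [Module A M] [Module.Finite A M]
    (N : Type u) [AddCommGroup N] [Module A N]
    (a b : ℕ) (f : M →ₗ[A] (Fin a → A)) (g : (Fin a → A) →ₗ[A] N)
    (hf : Function.Injective f) (hg : Function.Surjective g)
    (hfg : Function.Exact f g)
    (h : N →ₗ[A] (Fin b → A)) (hh : Function.Injective h) :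
    Function.Injective (Module.Dual.eval A M) ∧
      (GorensteinInCodim A 0 → SerreCondS A 1 →
        Function.Bijective (Module.Dual.eval A M)) := by
  exact reflexive_of_ses_into_free_general hf hfg
    (dual_eval_injective_of_injective hh (Module.bijective_dual_eval A _).injective)
end

section
/- Let B → A be a faithfully flat ring homomorphism of Noetherian rings such that every fiber ring A ⊗_B κ(q) is zero-dimensional and Gorenstein (e.g., B → A étale and surjective on spectra). Then B satisfies Serre's condition Sᵣ if and only if A satisfies Sᵣ. -/
open CategoryTheory IsLocalRing TensorProduct

universe u

/-!
Along a flat local homomorphism `B → A` of Noetherian local rings, both dimension and depth of `A`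
are those of `B` plus those of the closed fibre. For depth one proves more generally
`depth (A ⊗ M) = depth M + depth (A ⊗ k)` for finite `M` over `B` with residue field `k`: an
`M`-regular `x ∈ 𝔪_B` lowers both sides by one, and if `depth M = 0` then an embedding `k ↪ M`
bounds the left-hand side from above, while dévissage bounds it from below.

Apply this to `B_q → A_P`, whose closed fibre is a localization of `A ⊗ κ(q)`. Since `min r` is
subadditive, `Sᵣ` passes from `B` and the fibres to `A`. Conversely, for a prime `q` of `B` choose
`P` minimal in the fibre over `q`, which is nonempty by faithful flatness: there the fibre
contributes neither dimension nor depth, so `Sᵣ` at `P` is `Sᵣ` at `q`.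
-/

section ExtComparison

open Abelian Limits

variable {C : Type*} [Category* C] [Abelian C] [HasExt C] {X : C} (P : ProjectiveResolution X)

theorem subsingleton_ext_zero_iff_of_projectiveResolution (Y : C) :
    Subsingleton (Abelian.Ext X Y 0) ↔
      ∀ f : P.complex.X 0 ⟶ Y, P.complex.d 1 0 ≫ f = 0 → f = 0 := by
  let π : P.complex.X 0 ⟶ X := P.π.f 0
  have : Epi π := inferInstanceAs (Epi (P.π.f 0))
  have hπ : P.complex.d 1 0 ≫ π = 0 := P.complex_d_comp_π_f_zero
  rw [Ext.addEquiv₀.subsingleton_congr]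
  constructor
  · intro h f hf
    let g : X ⟶ Y := P.exact₀.desc f hf
    have hg : π ≫ g = f := P.exact₀.g_desc f hf
    rw [← hg, h.elim g 0, comp_zero]
  · refine fun h ↦ subsingleton_of_forall_eq 0 fun g ↦ ?_
    rw [← cancel_epi π, comp_zero]
    exact h (π ≫ g) (by rw [reassoc_of% hπ, zero_comp])

theorem subsingleton_ext_succ_iff_of_projectiveResolution (Y : C) (n : ℕ) :
    Subsingleton (Abelian.Ext X Y (n + 1)) ↔
      ∀ f : P.complex.X (n + 1) ⟶ Y, P.complex.d (n + 2) (n + 1) ≫ f = 0 →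
        ∃ g : P.complex.X n ⟶ Y, P.complex.d (n + 1) n ≫ g = f := by
  constructor
  · exact fun h f hf ↦ (P.extMk_eq_zero_iff f (n + 2) rfl hf n rfl).mp (h.elim _ _)
  · refine fun h ↦ subsingleton_of_forall_eq 0 fun a ↦ ?_
    obtain ⟨f, hf, rfl⟩ := P.extMk_surjective a (n + 2) rfl
    exact (P.extMk_eq_zero_iff f _ rfl hf n rfl).mpr (h f hf)

/-- `ExtGroup` is computed from a projective resolution, `Abelian.Ext` in the derived category. -/
theorem subsingleton_extGroup_iff {R : Type u} [CommRing R] (M N : Type u)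
    [AddCommGroup M] [Module R M] [AddCommGroup N] [Module R N] (n : ℕ) :
    Subsingleton (ExtGroup R M N n) ↔
      Subsingleton (Abelian.Ext (ModuleCat.of R M) (ModuleCat.of R N) n) := by
  let P := projectiveResolution (ModuleCat.of R M)
  have exactAt_iff : Subsingleton (ExtGroup R M N n) ↔
      (P.complex.linearYonedaObj R (ModuleCat.of R N)).ExactAt n := by
    rw [← ModuleCat.isZero_iff_subsingleton, HomologicalComplex.exactAt_iff_isZero_homology]
    exact (P.isoExt n (ModuleCat.of R N)).isZero_iff
  rw [exactAt_iff]
  cases n with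
  | zero =>
    rw [HomologicalComplex.exactAt_iff' _ 0 0 1 (by simp) (by simp),
      ShortComplex.moduleCat_exact_iff, subsingleton_ext_zero_iff_of_projectiveResolution P]
    refine forall₂_congr fun f _ ↦ ⟨?_, fun hf ↦ ⟨0, (map_zero _).trans hf.symm⟩⟩
    rintro ⟨(g : P.complex.X 0 ⟶ ModuleCat.of R N), hg : P.complex.d 0 0 ≫ g = f⟩
    rw [← hg, P.complex.shape 0 0 (by simp), zero_comp]
  | succ n =>
    rw [HomologicalComplex.exactAt_iff' _ n (n + 1) (n + 2) (by simp) (by simp),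
      ShortComplex.moduleCat_exact_iff, subsingleton_ext_succ_iff_of_projectiveResolution P]
    rfl

end ExtComparison

section Depth

open Abelian

theorem subsingleton_ext_X₁_of_comp_f_eq_zero {C : Type*} [Category* C] [Abelian C] [HasExt C]
    {X : C} {S : ShortComplex C} (hS : S.ShortExact) {i : ℕ}
    (hf : ∀ a : Abelian.Ext X S.X₁ i, a.comp (Ext.mk₀ S.f) (add_zero i) = 0)
    (h₃ : ∀ j, j + 1 = i → Subsingleton (Abelian.Ext X S.X₃ j)) :
    Subsingleton (Abelian.Ext X S.X₁ i) := by
  refine subsingleton_of_forall_eq 0 fun a ↦ ?_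
  cases i with
  | zero =>
    have := hS.mono_f
    exact Ext.postcomp_mk₀_injective_of_mono X S.f ((hf a).trans (map_zero _).symm)
  | succ j =>
    obtain ⟨c, rfl⟩ := Ext.covariant_sequence_exact₁ X hS a (hf a) rfl
    rw [(h₃ j rfl).elim c 0, Ext.zero_comp]

theorem shortExact_shortComplexOfCompEqZero {R : Type u} [Ring R] {M₁ M₂ M₃ : Type u}
    [AddCommGroup M₁] [AddCommGroup M₂] [AddCommGroup M₃] [Module R M₁] [Module R M₂] [Module R M₃]
    {f : M₁ →ₗ[R] M₂} {g : M₂ →ₗ[R] M₃} (hf : Function.Injective f) (hg : Function.Surjective g)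
    (hfg : Function.Exact f g) :
    (ModuleCat.shortComplexOfCompEqZero f g hfg.linearMap_comp_eq_zero).ShortExact :=
  ModuleCat.shortComplex_shortExact _ hfg hf hg

variable {R : Type u} [CommRing R] [IsLocalRing R]

theorem le_moduleDepth_iff {M : Type u} [AddCommGroup M] [Module R M] {d : ℕ∞} :
    d ≤ moduleDepth R M ↔ ∀ i : ℕ, (i : ℕ∞) < d →
      Subsingleton (Abelian.Ext (ModuleCat.of R (ResidueField R)) (ModuleCat.of R M) i) := by
  simp only [moduleDepth, le_sInf_iff, Set.mem_ofPred_eq, ← subsingleton_extGroup_iff]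
  refine ⟨fun h i hi ↦ ?_, ?_⟩
  · by_contra hs
    exact hi.not_ge (h i ⟨i, rfl, not_subsingleton_iff_nontrivial.mp hs⟩)
  · rintro h _ ⟨i, rfl, hs⟩
    by_contra hi
    exact not_subsingleton_iff_nontrivial.mpr hs (h i (not_le.mp hi))

theorem moduleDepth_congr {M N : Type u} [AddCommGroup M] [Module R M] [AddCommGroup N]
    [Module R N] (e : M ≃ₗ[R] N) : moduleDepth R M = moduleDepth R N := by
  have (i : ℕ) : Nontrivial (ExtGroup R (ResidueField R) M i) ↔
      Nontrivial (ExtGroup R (ResidueField R) N i) :=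
    (((_root_.Ext R (ModuleCat.{u} R) i).obj _).mapIso
      e.toModuleIso).toLinearEquiv.toEquiv.nontrivial_congr
  simp only [moduleDepth, this]

section ShortExact

variable {M₁ M₂ M₃ : Type u} [AddCommGroup M₁] [AddCommGroup M₂] [AddCommGroup M₃]
  [Module R M₁] [Module R M₂] [Module R M₃] {f : M₁ →ₗ[R] M₂} {g : M₂ →ₗ[R] M₃}
  (hf : Function.Injective f) (hg : Function.Surjective g) (hfg : Function.Exact f g)
include hf hg hfg

theorem min_moduleDepth_le_moduleDepth_middle :
    min (moduleDepth R M₁) (moduleDepth R M₃) ≤ moduleDepth R M₂ := by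
  refine le_moduleDepth_iff.mpr fun i hi ↦ subsingleton_of_forall_eq 0 fun b ↦ ?_
  have ext₁ := le_moduleDepth_iff.mp le_rfl i (hi.trans_le (min_le_left _ _))
  have ext₃ := le_moduleDepth_iff.mp le_rfl i (hi.trans_le (min_le_right _ _))
  obtain ⟨a, rfl⟩ := Ext.covariant_sequence_exact₂ _
    (shortExact_shortComplexOfCompEqZero hf hg hfg) b (ext₃.elim _ _)
  rw [ext₁.elim a 0, Ext.zero_comp]

theorem min_moduleDepth_le_moduleDepth_left :
    min (moduleDepth R M₂) (moduleDepth R M₃ + 1) ≤ moduleDepth R M₁ := by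
  refine le_moduleDepth_iff.mpr fun i hi ↦
    subsingleton_ext_X₁_of_comp_f_eq_zero (shortExact_shortComplexOfCompEqZero hf hg hfg)
      (fun a ↦ ?_) fun j hj ↦ ?_
  · exact (le_moduleDepth_iff.mp le_rfl i (hi.trans_le (min_le_left _ _))).elim _ _
  · subst hj
    have hj : (j : ℕ∞) + 1 < moduleDepth R M₃ + 1 := mod_cast hi.trans_le (min_le_right _ _)
    exact le_moduleDepth_iff.mp le_rfl j (lt_of_add_lt_add_right hj)

theorem min_moduleDepth_le_moduleDepth_right_add_one :
    min (moduleDepth R M₁) (moduleDepth R M₂ + 1) ≤ moduleDepth R M₃ + 1 := by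
  rw [← tsub_le_iff_right, le_moduleDepth_iff]
  refine fun i hi ↦ subsingleton_of_forall_eq 0 fun c ↦ ?_
  obtain ⟨hi₁, hi₂⟩ := lt_min_iff.mp (lt_tsub_iff_right.mp hi)
  have ext₁ := le_moduleDepth_iff.mp le_rfl (i + 1) (mod_cast hi₁)
  have ext₂ := le_moduleDepth_iff.mp le_rfl i (lt_of_add_lt_add_right hi₂)
  obtain ⟨b, rfl⟩ := Ext.covariant_sequence_exact₃ _
    (shortExact_shortComplexOfCompEqZero hf hg hfg) c rfl (ext₁.elim _ _)
  rw [ext₂.elim b 0, Ext.zero_comp]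

end ShortExact

variable {M : Type u} [AddCommGroup M] [Module R M]

/-- Multiplication by `x` on `Ext i k M` is zero because `x` kills `k`, so it can only be injective
if the group vanishes. -/
theorem moduleDepth_eq_moduleDepth_quotSMulTop_add_one {x : R} (hx : x ∈ maximalIdeal R)
    (hreg : IsSMulRegular M x) :
    moduleDepth R M = moduleDepth R (QuotSMulTop x M) + 1 := by
  refine le_antisymm ?_ ?_
  · have := min_moduleDepth_le_moduleDepth_right_add_one (f := LinearMap.lsmul R M x) hreg
      (Submodule.mkQ_surjective _) (LinearMap.exact_lsmul_mkQ_smul_top M x)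
    rwa [min_eq_left le_self_add] at this
  · have hS : ((ModuleCat.of R M).smulShortComplex x).ShortExact := hreg.smulShortComplex_shortExact
    refine le_moduleDepth_iff.mpr fun i hi ↦
      subsingleton_ext_X₁_of_comp_f_eq_zero hS (fun a ↦ ?_) fun j hj ↦ ?_
    · have hann : x ∈ Module.annihilator R (ModuleCat.of R (ResidueField R)) := by
        change x ∈ Module.annihilator R (R ⧸ maximalIdeal R)
        rwa [Ideal.annihilator_quotient]
      exact congr($(Ext.postcomp_smul_id_eq_zero_of_mem_annihilator (M := .of R M) hann i) a)
    · subst hj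
      exact le_moduleDepth_iff.mp le_rfl j (lt_of_add_lt_add_right (a := 1) (mod_cast hi))

theorem moduleDepth_eq_top_of_subsingleton [Subsingleton M] : moduleDepth R M = ⊤ := by
  refine top_le_iff.mp (le_moduleDepth_iff.mpr fun i _ ↦ subsingleton_of_forall_eq 0 fun a ↦ ?_)
  rw [← a.comp_mk₀_id, (ModuleCat.isZero_of_subsingleton (ModuleCat.of R M)).eq_of_src (𝟙 _) 0,
    Ext.mk₀_zero, Ext.comp_zero]

theorem moduleDepth_ne_zero_iff_subsingleton :
    moduleDepth R M ≠ 0 ↔ Subsingleton (ResidueField R →ₗ[R] M) := by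
  rw [← Order.one_le_iff_ne_zero, le_moduleDepth_iff]
  simp only [Order.lt_one_iff, Nat.cast_eq_zero, forall_eq]
  rw [Abelian.Ext.addEquiv₀.subsingleton_congr, ModuleCat.homEquiv.subsingleton_congr]

theorem exists_injective_residueField_of_moduleDepth_eq_zero (h : moduleDepth R M = 0) :
    ∃ f : ResidueField R →ₗ[R] M, Function.Injective f := by
  have : IsSimpleModule R (ResidueField R) :=
    isSimpleModule_iff_isCoatom.mpr (maximalIdeal.isMaximal R).out
  have : Nontrivial (ResidueField R →ₗ[R] M) := by
    rwa [← not_subsingleton_iff_nontrivial, ← moduleDepth_ne_zero_iff_subsingleton, not_not]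
  obtain ⟨f, hf⟩ := exists_ne (0 : ResidueField R →ₗ[R] M)
  exact ⟨f, f.injective_or_eq_zero.resolve_right hf⟩

theorem moduleDepth_ne_zero_iff_exists_isSMulRegular [IsNoetherianRing R] [Module.Finite R M] :
    moduleDepth R M ≠ 0 ↔ ∃ x ∈ maximalIdeal R, IsSMulRegular M x := by
  rw [moduleDepth_ne_zero_iff_subsingleton, IsSMulRegular.subsingleton_linearMap_iff]
  change (∃ x ∈ Module.annihilator R (R ⧸ maximalIdeal R), _) ↔ _
  rw [Ideal.annihilator_quotient]

end Depth

section Surjective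

open scoped Pointwise

variable {R S : Type u} [CommRing R] [CommRing S] [Algebra R S]

theorem restrictScalars_algebraMap_smul_top (M : Type*) [AddCommGroup M] [Module R M]
    [Module S M] [IsScalarTower R S M] (x : R) :
    (algebraMap R S x • (⊤ : Submodule S M)).restrictScalars R = x • ⊤ := by
  ext m
  simp [Submodule.mem_smul_pointwise_iff_exists]

variable (S) in
/-- The quotient `M ⧸ xM` does not depend on whether `x` is seen in `R` or in an `R`-algebra `S`. -/
noncomputable def quotSMulTopAlgebraMapEquiv (M : Type*) [AddCommGroup M] [Module R M] [Module S M]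
    [IsScalarTower R S M] (x : R) :
    QuotSMulTop x M ≃ₗ[R] QuotSMulTop (algebraMap R S x) M :=
  (Submodule.quotEquivOfEq _ _ (restrictScalars_algebraMap_smul_top M x).symm).trans
    (Submodule.Quotient.restrictScalarsEquiv R (algebraMap R S x • (⊤ : Submodule S M)))

variable [IsLocalRing R] [IsLocalRing S] [IsNoetherianRing R]

theorem moduleDepth_eq_of_surjective
    (hsurj : Function.Surjective (algebraMap R S)) (M : Type u) [AddCommGroup M] [Module R M]
    [Module S M] [IsScalarTower R S M] [Module.Finite S M] :
    moduleDepth R M = moduleDepth S M := by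
  have : IsNoetherianRing S := isNoetherianRing_of_surjective R S (algebraMap R S) hsurj
  have : IsLocalHom (algebraMap R S) := hsurj.isLocalHom _
  have : Module.Finite R S := .of_surjective (Algebra.linearMap R S) hsurj
  suffices h : ∀ n : ℕ, (n : ℕ∞) ≤ moduleDepth R M ↔ (n : ℕ∞) ≤ moduleDepth S M from
    ENat.eq_of_forall_natCast_le_iff h
  intro n
  induction n generalizing M with
  | zero => simp
  | succ n ih =>
    have : Module.Finite R M := .trans S M
    have regular_iff : moduleDepth S M ≠ 0 ↔ ∃ x ∈ maximalIdeal R, IsSMulRegular M x := by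
      simp only [moduleDepth_ne_zero_iff_exists_isSMulRegular, hsurj.exists,
        isSMulRegular_algebraMap_iff, mem_maximalIdeal, mem_nonunits_iff, isUnit_map_iff]
    by_cases h : ∃ x ∈ maximalIdeal R, IsSMulRegular M x
    · obtain ⟨x, hx, hreg⟩ := h
      rw [moduleDepth_eq_moduleDepth_quotSMulTop_add_one hx hreg,
        moduleDepth_eq_moduleDepth_quotSMulTop_add_one (map_nonunit (algebraMap R S) x hx)
          ((isSMulRegular_algebraMap_iff S).mpr hreg),
        moduleDepth_congr (quotSMulTopAlgebraMapEquiv S M x), Nat.cast_succ,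
        ENat.add_le_add_iff_right ENat.one_ne_top, ENat.add_le_add_iff_right ENat.one_ne_top]
      exact ih _
    · rw [not_not.mp (regular_iff.not.mpr h),
        not_not.mp (moduleDepth_ne_zero_iff_exists_isSMulRegular.not.mpr h)]

end Surjective

section FlatLocalHom

/-- Dévissage of finite modules over a Noetherian local ring: by a prime filtration it suffices to
treat `R ⧸ p`, and if `p` is not maximal then some `x ∈ 𝔪 \ p` is regular on `R ⧸ p`, while
`R ⧸ (p + (x))` has a larger annihilator. -/
@[elab_as_elim]
theorem induction_on_residueField_of_isSMulRegular {R : Type u} [CommRing R] [IsLocalRing R]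
    [IsNoetherianRing R] ⦃M : Type u⦄ [AddCommGroup M] [Module R M] (hM : Module.Finite R M)
    {motive : (N : Type u) → [AddCommGroup N] → [Module R N] → [Module.Finite R N] → Prop}
    (subsingleton : (N : Type u) → [AddCommGroup N] → [Module R N] → [Module.Finite R N] →
      [Subsingleton N] → motive N)
    (residueField : (N : Type u) → [AddCommGroup N] → [Module R N] → [Module.Finite R N] →
      (N ≃ₗ[R] ResidueField R) → motive N)
    (isSMulRegular : (N : Type u) → [AddCommGroup N] → [Module R N] → [Module.Finite R N] →
      (x : R) → x ∈ maximalIdeal R → IsSMulRegular N x → motive (QuotSMulTop x N) → motive N)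
    (exact : (N₁ : Type u) → [AddCommGroup N₁] → [Module R N₁] → [Module.Finite R N₁] →
      (N₂ : Type u) → [AddCommGroup N₂] → [Module R N₂] → [Module.Finite R N₂] →
      (N₃ : Type u) → [AddCommGroup N₃] → [Module R N₃] → [Module.Finite R N₃] →
      (f : N₁ →ₗ[R] N₂) → (g : N₂ →ₗ[R] N₃) →
      Function.Injective f → Function.Surjective g → Function.Exact f g →
      motive N₁ → motive N₃ → motive N₂) : motive M := by
  suffices h : ∀ (I : Ideal R) (N : Type u) [AddCommGroup N] [Module R N] [Module.Finite R N],
      I ≤ Module.annihilator R N → motive N from h ⊥ M bot_le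
  intro I
  induction I using WellFoundedGT.induction with | ind I ih
  intro N _ _ hN
  induction hN using IsNoetherianRing.induction_on_isQuotientEquivQuotientPrime R with
  | subsingleton N => exact fun _ ↦ subsingleton N
  | exact N₁ N₂ N₃ f g hf hg hfg h₁ h₃ =>
    exact fun hI ↦ exact N₁ N₂ N₃ f g hf hg hfg
      (h₁ (hI.trans (f.annihilator_le_of_injective hf)))
      (h₃ (hI.trans (g.annihilator_le_of_surjective hg)))
  | quotient N p e =>
    intro hI
    rcases (le_maximalIdeal p.2.ne_top).eq_or_lt with hp | hp
    · exact residueField N (e.trans (Submodule.quotEquivOfEq _ _ hp))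
    · obtain ⟨x, hx, hxp⟩ := SetLike.exists_of_lt hp
      have hann : Module.annihilator R N = p.asIdeal := by
        rw [e.annihilator_eq, Ideal.annihilator_quotient]
      refine isSMulRegular N x hx ?_ (ih (I ⊔ Ideal.span {x}) ?_ _ (sup_le ?_ ?_))
      · have : IsSMulRegular (R ⧸ p.asIdeal) x := by
          have hx₀ : algebraMap R (R ⧸ p.asIdeal) x ≠ 0 :=
            Ideal.Quotient.eq_zero_iff_mem.not.mpr hxp
          exact (isSMulRegular_algebraMap_iff (R ⧸ p.asIdeal)).mp (.of_ne_zero hx₀)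
        exact (e.isSMulRegular_congr x).mpr this
      · exact left_lt_sup.mpr fun h ↦
          hxp (hann.le (hI (h (Ideal.mem_span_singleton_self x))))
      · exact hI.trans ((Submodule.mkQ _).annihilator_le_of_surjective (Submodule.mkQ_surjective _))
      · exact (Ideal.span_singleton_le_iff_mem _).mpr (QuotSMulTop.mem_annihilator N x)

variable {B A : Type u} [CommRing B] [CommRing A] [IsLocalRing B] [IsLocalRing A]
  [Algebra B A] [Module.Flat B A] [IsLocalHom (algebraMap B A)]
  (M : Type u) [AddCommGroup M] [Module B M]

theorem moduleDepth_baseChange_eq_quotSMulTop_add_one {x : B} (hx : x ∈ maximalIdeal B)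
    (hreg : IsSMulRegular M x) :
    moduleDepth A (A ⊗[B] M) = moduleDepth A (A ⊗[B] QuotSMulTop x M) + 1 := by
  rw [moduleDepth_eq_moduleDepth_quotSMulTop_add_one (map_nonunit (algebraMap B A) x hx)
      (hreg.of_flat_of_isBaseChange (TensorProduct.isBaseChange B M A)),
    moduleDepth_congr (QuotSMulTop.algebraMapTensorEquivTensorQuotSMulTop x M A)]

variable [IsNoetherianRing B] [Module.Finite B M]

theorem moduleDepth_baseChange_residueField_le :
    moduleDepth A (A ⊗[B] ResidueField B) ≤ moduleDepth A (A ⊗[B] M) := by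
  induction ‹Module.Finite B M› using induction_on_residueField_of_isSMulRegular with
  | subsingleton N => exact moduleDepth_eq_top_of_subsingleton.ge.trans' le_top
  | residueField N e => exact (moduleDepth_congr (e.symm.baseChange B A _ _)).le
  | isSMulRegular N x hx hreg h =>
    exact h.trans (le_self_add.trans (moduleDepth_baseChange_eq_quotSMulTop_add_one N hx hreg).ge)
  | exact N₁ N₂ N₃ f g hf hg hfg h₁ h₃ =>
    exact (le_min h₁ h₃).trans <|
      min_moduleDepth_le_moduleDepth_middle (f := f.baseChange A) (g := g.baseChange A)
        (Module.Flat.lTensor_preserves_injective_linearMap f hf) (g.lTensor_surjective A hg)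
        (lTensor_exact A hfg hg)

variable {M} in
theorem moduleDepth_baseChange_of_moduleDepth_eq_zero (h : moduleDepth B M = 0) :
    moduleDepth A (A ⊗[B] M) = moduleDepth A (A ⊗[B] ResidueField B) := by
  obtain ⟨f, hf⟩ := exists_injective_residueField_of_moduleDepth_eq_zero h
  let g := f.range.mkQ
  have hg : Function.Surjective g := f.range.mkQ_surjective
  have hfg : Function.Exact f g := f.exact_map_mkQ_range
  have min_le := min_moduleDepth_le_moduleDepth_left (f := f.baseChange A) (g := g.baseChange A)
    (Module.Flat.lTensor_preserves_injective_linearMap f hf) (g.lTensor_surjective A hg)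
    (lTensor_exact A hfg hg)
  have coker_ge := moduleDepth_baseChange_residueField_le (B := B) (A := A) (M ⧸ f.range)
  refine le_antisymm ?_ (moduleDepth_baseChange_residueField_le M)
  by_contra! hlt
  refine (lt_min hlt ?_).not_ge min_le
  exact (ENat.lt_add_one_iff' hlt.ne_top).mpr coker_ge

theorem moduleDepth_baseChange :
    moduleDepth A (A ⊗[B] M) = moduleDepth B M + moduleDepth A (A ⊗[B] ResidueField B) := by
  refine ENat.eq_of_forall_natCast_le_iff fun n ↦ ?_
  induction n generalizing M with
  | zero => simp
  | succ n ih =>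
    by_cases h : moduleDepth B M = 0
    · rw [moduleDepth_baseChange_of_moduleDepth_eq_zero h, h, zero_add]
    · obtain ⟨x, hx, hreg⟩ := moduleDepth_ne_zero_iff_exists_isSMulRegular.mp h
      rw [moduleDepth_baseChange_eq_quotSMulTop_add_one M hx hreg,
        moduleDepth_eq_moduleDepth_quotSMulTop_add_one hx hreg, add_right_comm, Nat.cast_succ,
        ENat.add_le_add_iff_right ENat.one_ne_top, ENat.add_le_add_iff_right ENat.one_ne_top]
      exact ih _

end FlatLocalHom

section ClosedFiber

variable {B A F : Type u} [CommRing B] [CommRing A] [CommRing F] [IsLocalRing B] [IsLocalRing A]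
  [IsLocalRing F] [IsNoetherianRing B] [IsNoetherianRing A] [Algebra B A] [Module.Flat B A]
  [IsLocalHom (algebraMap B A)] {φ : A →+* F} (hφ : Function.Surjective φ)
  (hker : RingHom.ker φ = (maximalIdeal B).map (algebraMap B A))
include hφ hker

theorem ringKrullDim_eq_add_of_ker_eq_map_maximalIdeal :
    ringKrullDim A = ringKrullDim B + ringKrullDim F := by
  let e : (A ⧸ (maximalIdeal B).map (algebraMap B A)) ≃+* F :=
    (Ideal.quotEquivOfEq hker.symm).trans (RingHom.quotientKerEquivOfSurjective hφ)
  have map_maximalIdeal :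
      ((maximalIdeal A).map (Ideal.Quotient.mk ((maximalIdeal B).map (algebraMap B A)))).map e =
        maximalIdeal F := by
    rw [← Ideal.map_coe e, Ideal.map_map]
    exact map_maximalIdeal_of_surjective φ hφ
  simp only [← maximalIdeal_height_eq_ringKrullDim]
  rw [Ideal.height_eq_height_add_of_liesOver_of_hasGoingDown (maximalIdeal B) (maximalIdeal A),
    ← map_maximalIdeal, e.height_map, WithBot.coe_add]

theorem moduleDepth_eq_add_of_ker_eq_map_maximalIdeal :
    moduleDepth A A = moduleDepth B B + moduleDepth F F := by
  let := φ.toAlgebra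
  let e : A ⊗[B] ResidueField B ≃ₗ[A] F :=
    (Algebra.TensorProduct.quotIdealMapEquivTensorQuot A (maximalIdeal B)).symm.toLinearEquiv.trans
      ((Submodule.quotEquivOfEq _ _ hker.symm).trans
      ((Algebra.linearMap A F).quotKerEquivOfSurjective hφ))
  rw [← moduleDepth_congr (AlgebraTensorModule.rid B A A), moduleDepth_baseChange B,
    moduleDepth_congr e, moduleDepth_eq_of_surjective hφ F]

end ClosedFiber

section Fiber

variable {B A : Type u} [CommRing B] [CommRing A] [Algebra B A] {q : Ideal B} [q.IsPrime]
  {P : Ideal A} [P.IsPrime] {Q : Ideal (q.Fiber A)} [Q.IsPrime]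

theorem exists_surjective_localization_fiber
    (hP : Q.comap Algebra.TensorProduct.includeRight = P) :
    ∃ φ : Localization.AtPrime P →+* Localization.AtPrime Q, Function.Surjective φ ∧
      RingHom.ker φ = q.map (algebraMap B (Localization.AtPrime P)) := by
  subst hP
  let := Localization.AtPrime.algebraOfLiesOver q (Q.comap Algebra.TensorProduct.includeRight)
  let e := (Ideal.Fiber.localizationAlgEquivQuotient q Q).symm.toRingEquiv
  exact ⟨e.toRingHom.comp (Ideal.Quotient.mk _), e.surjective.comp Ideal.Quotient.mk_surjective,
    (RingHom.ker_equiv_comp _ e).trans Ideal.mk_ker⟩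

variable (q P) in
theorem map_maximalIdeal_localization [Algebra (Localization.AtPrime q) (Localization.AtPrime P)]
    [IsScalarTower B (Localization.AtPrime q) (Localization.AtPrime P)] :
    (maximalIdeal (Localization.AtPrime q)).map
        (algebraMap (Localization.AtPrime q) (Localization.AtPrime P)) =
      q.map (algebraMap B (Localization.AtPrime P)) := by
  rw [← Localization.AtPrime.map_eq_maximalIdeal, Ideal.map_map, ← IsScalarTower.algebraMap_eq]

attribute [local instance] Localization.AtPrime.algebraOfLiesOver

variable (q P) in
theorem isLocalHom_algebraMap_localization [P.LiesOver q] :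
    IsLocalHom (algebraMap (Localization.AtPrime q) (Localization.AtPrime P)) := by
  rw [RingHom.algebraMap_toAlgebra]
  exact Localization.isLocalHom_localRingHom q P (algebraMap B A) Ideal.LiesOver.over

variable (q A) in
theorem isNoetherianRing_fiber [IsNoetherianRing A] : IsNoetherianRing (q.Fiber A) := by
  have : IsNoetherianRing (A ⊗[B] q.ResidueField) := Algebra.EssFiniteType.isNoetherianRing A _
  exact isNoetherianRing_of_ringEquiv _ (Algebra.TensorProduct.comm B A q.ResidueField).toRingEquiv

variable [IsNoetherianRing B] [IsNoetherianRing A] [Module.Flat B A]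
  (hP : Q.comap Algebra.TensorProduct.includeRight = P)
include hP

theorem height_eq_height_add_height_fiber : P.height = q.height + Q.height := by
  have : P.LiesOver q := hP ▸ inferInstance
  have := isLocalHom_algebraMap_localization q P
  obtain ⟨φ, hφ, hker⟩ := exists_surjective_localization_fiber hP
  rw [← map_maximalIdeal_localization q P] at hker
  have := ringKrullDim_eq_add_of_ker_eq_map_maximalIdeal (F := Localization.AtPrime Q) hφ hker
  simp only [IsLocalization.AtPrime.ringKrullDim_eq_height P,
    IsLocalization.AtPrime.ringKrullDim_eq_height q,
    IsLocalization.AtPrime.ringKrullDim_eq_height Q] at this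
  exact_mod_cast this

theorem moduleDepth_localization_eq_add_fiber :
    moduleDepth (Localization.AtPrime P) (Localization.AtPrime P) =
      moduleDepth (Localization.AtPrime q) (Localization.AtPrime q) +
        moduleDepth (Localization.AtPrime Q) (Localization.AtPrime Q) := by
  have : P.LiesOver q := hP ▸ inferInstance
  have := isLocalHom_algebraMap_localization q P
  obtain ⟨φ, hφ, hker⟩ := exists_surjective_localization_fiber hP
  rw [← map_maximalIdeal_localization q P] at hker
  exact moduleDepth_eq_add_of_ker_eq_map_maximalIdeal (F := Localization.AtPrime Q) hφ hker

end Fiber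

section Serre

theorem serreCondS_iff {R : Type u} [CommRing R] {r : ℕ} :
    SerreCondS R r ↔ ∀ p : PrimeSpectrum R, min (r : ℕ∞) p.asIdeal.height ≤
      moduleDepth (Localization.AtPrime p.asIdeal) (Localization.AtPrime p.asIdeal) := by
  refine forall_congr' fun p ↦ ?_
  rw [IsLocalization.AtPrime.ringKrullDim_eq_height p.asIdeal, ← WithBot.coe_natCast]
  norm_cast

theorem serreCondS_of_krullDimLE_zero {R : Type u} [CommRing R] [Ring.KrullDimLE 0 R] (r : ℕ) :
    SerreCondS R r := by
  refine serreCondS_iff.mpr fun p ↦ ?_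
  have : p.asIdeal ∈ minimalPrimes R :=
    Ring.KrullDimLE.mem_minimalPrimes_iff_le_of_isPrime.mpr bot_le
  rw [Ideal.height_eq_zero_iff.mpr this, min_zero]
  exact zero_le

theorem moduleDepth_self_eq_zero_of_krullDimLE_zero {R : Type u} [CommRing R] [IsLocalRing R]
    [IsNoetherianRing R] [Ring.KrullDimLE 0 R] : moduleDepth R R = 0 := by
  by_contra h
  obtain ⟨x, hx, hreg⟩ := moduleDepth_ne_zero_iff_exists_isSMulRegular.mp h
  obtain ⟨n, hn⟩ := (Ring.KrullDimLE.isNilpotent_iff_mem_maximalIdeal).mpr hx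
  exact IsSMulRegular.not_zero (hn ▸ hreg.pow n)

variable {B A : Type u} [CommRing B] [CommRing A] [IsNoetherianRing B] [IsNoetherianRing A]
  [Algebra B A] {r : ℕ}

theorem SerreCondS.of_flat [Module.Flat B A] (hB : SerreCondS B r)
    (hfib : ∀ q : PrimeSpectrum B, SerreCondS (q.asIdeal.Fiber A) r) : SerreCondS A r := by
  refine serreCondS_iff.mpr fun P ↦ ?_
  let q := P.comap (algebraMap B A)
  let Q := PrimeSpectrum.preimageEquivFiber B A q ⟨P, rfl⟩
  have hQ : Q.asIdeal.comap Algebra.TensorProduct.includeRight = P.asIdeal :=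
    congr(($((PrimeSpectrum.preimageEquivFiber B A q).symm_apply_apply ⟨P, rfl⟩)).1.asIdeal)
  rw [height_eq_height_add_height_fiber hQ, moduleDepth_localization_eq_add_fiber hQ,
    min_add_distrib]
  exact (min_le_right _ _).trans <|
    add_le_add (serreCondS_iff.mp hB q) (serreCondS_iff.mp (hfib q) Q)

theorem SerreCondS.of_faithfullyFlat [Module.FaithfullyFlat B A] (hA : SerreCondS A r) :
    SerreCondS B r := by
  refine serreCondS_iff.mpr fun q ↦ ?_
  obtain ⟨Q, hQ⟩ := Ideal.nonempty_minimalPrimes (R := q.asIdeal.Fiber A) (I := ⊥) bot_ne_top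
  have : Q.IsPrime := hQ.1.1
  have height_Q : Q.height = 0 := Ideal.height_eq_zero_iff.mpr hQ
  have : Ring.KrullDimLE 0 (Localization.AtPrime Q) := by
    rw [Ring.krullDimLE_iff,
      IsLocalization.AtPrime.ringKrullDim_eq_height Q (Localization.AtPrime Q), height_Q]
    rfl
  have := isNoetherianRing_fiber A q.asIdeal
  have depth_Q : moduleDepth (Localization.AtPrime Q) (Localization.AtPrime Q) = 0 :=
    moduleDepth_self_eq_zero_of_krullDimLE_zero
  have h := serreCondS_iff.mp hA ⟨Q.comap Algebra.TensorProduct.includeRight, inferInstance⟩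
  rwa [height_eq_height_add_height_fiber rfl, moduleDepth_localization_eq_add_fiber rfl, height_Q,
    depth_Q, add_zero, add_zero] at h

end Serre

theorem serreCondS_iff_of_faithfullyFlat_general (B A : Type u) [CommRing B] [CommRing A]
    [IsNoetherianRing B] [IsNoetherianRing A] [Algebra B A] [Module.FaithfullyFlat B A] (r : ℕ)
    (hfib : ∀ q : PrimeSpectrum B, SerreCondS (q.asIdeal.Fiber A) r) :
    SerreCondS B r ↔ SerreCondS A r :=
  ⟨fun hB ↦ hB.of_flat hfib, fun hA ↦ hA.of_faithfullyFlat⟩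

/-- Let `B → A` be a faithfully flat map of Noetherian rings all of whose fiber rings
`A ⊗_B κ(q)` are zero-dimensional and Gorenstein. Then `B` satisfies Serre's condition
`Sᵣ` if and only if `A` does. -/
theorem serreCondS_iff_of_faithfullyFlat
    (B A : Type u) [CommRing B] [CommRing A] [IsNoetherianRing B] [IsNoetherianRing A]
    [Algebra B A] [Module.FaithfullyFlat B A]
    (hdim : ∀ q : PrimeSpectrum B,
      ringKrullDim
        (A ⊗[B] IsLocalRing.ResidueField (Localization.AtPrime q.asIdeal)) = 0)
    (hGor : ∀ q : PrimeSpectrum B,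
      ∀ P : PrimeSpectrum
        (A ⊗[B] IsLocalRing.ResidueField (Localization.AtPrime q.asIdeal)),
        IsGorensteinLocalRing (Localization.AtPrime P.asIdeal))
    (r : ℕ) :
    SerreCondS B r ↔ SerreCondS A r := by
  refine serreCondS_iff_of_faithfullyFlat_general B A r fun q ↦ ?_
  have : Ring.KrullDimLE 0 (q.asIdeal.Fiber A) := by
    rw [Ring.krullDimLE_iff, ← ringKrullDim_eq_of_ringEquiv
      (Algebra.TensorProduct.comm B A q.asIdeal.ResidueField).toRingEquiv]
    exact (hdim q).le
  exact serreCondS_of_krullDimLE_zero r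
end

section
/- Let B → A be an étale ring homomorphism of Noetherian rings inducing a surjection on spectra. Then B is Gorenstein in codimension r (Gᵣ) if and only if A is Gorenstein in codimension r. -/
open CategoryTheory IsLocalRing TensorProduct

universe u

/-!
Flat base change `S ⊗[R] -` along a map of Noetherian rings commutes with `Ext` out of finite
modules. For a flat local homomorphism `R → S` with `𝔪_R S = 𝔪_S` it moreover takes `κ(R)` to `κ(S)`
and preserves the dimension. Since `κ(R)` is, up to isomorphism, the only simple `R`-module, the
condition `Ext^n(k, R) ≅ k` asks that `Ext^n(k, R)` be simple; vanishing and simplicity both descend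
along the faithfully flat map `R → S`, so `R` is Gorenstein iff `S` is. An étale homomorphism
`B → A` induces such a map `B_q → A_p` at every prime `p` of `A`.
-/

section BaseChange

variable (R S : Type u) [CommRing R] [CommRing S] [Algebra R S]

/-- The base change functor `M ↦ S ⊗[R] M`. Mathlib's `ModuleCat.extendScalars` gives `S` the
`R`-module structure restricted along a ring homomorphism, which is not definitionally the one
coming from `Algebra R S`. -/
noncomputable def baseChangeFunctor : ModuleCat.{u} R ⥤ ModuleCat.{u} S where
  obj M := ModuleCat.of S (S ⊗[R] M)
  map f := ModuleCat.ofHom (f.hom.baseChange S)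

instance : (baseChangeFunctor R S).Additive where
  map_add {_ _ f g} := ModuleCat.hom_ext (LinearMap.baseChange_add f.hom g.hom)

instance : (baseChangeFunctor R S).PreservesProjectiveObjects where
  projective_obj {M} hM := by
    rw [← IsProjective.iff_projective] at hM ⊢
    exact inferInstanceAs (Module.Projective S (S ⊗[R] M))

instance [Module.Flat R S] : (baseChangeFunctor R S).PreservesHomology := by
  refine ((baseChangeFunctor R S).exact_tfae.out 1 2 :).mp fun C hC ↦ ?_
  rw [ShortComplex.ShortExact.moduleCat_exact_iff_function_exact] at hC ⊢
  exact Module.Flat.lTensor_exact S hC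

variable {R} [Module.Flat R S]

/-- The isomorphism `S ⊗ Hom(M, N) ≅ Hom(S ⊗ M, S ⊗ N)`, for `M` finitely presented and
`S` flat. -/
noncomputable def baseChangeHomEquiv (M N : ModuleCat.{u} R) [Module.FinitePresentation R M] :
    S ⊗[R] (M ⟶ N) ≃ₗ[S] ((baseChangeFunctor R S).obj M ⟶ (baseChangeFunctor R S).obj N) :=
  (ModuleCat.homLinearEquiv (S := R)).baseChange R S _ _ ≪≫ₗ
    (Module.FinitePresentation.isBaseChange_map R M N S).equiv ≪≫ₗ
    (ModuleCat.homLinearEquiv (S := S) (M := (baseChangeFunctor R S).obj M)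
      (N := (baseChangeFunctor R S).obj N)).symm

lemma baseChangeHomEquiv_tmul (M N : ModuleCat.{u} R) [Module.FinitePresentation R M]
    (s : S) (f : M ⟶ N) :
    baseChangeHomEquiv S M N (s ⊗ₜ f) = s • (baseChangeFunctor R S).map f :=
  ModuleCat.hom_ext <|
    (Module.FinitePresentation.isBaseChange_map R M N S).equiv_tmul s f.hom

lemma baseChangeHomEquiv_lTensor_comp {L M : ModuleCat.{u} R} [Module.FinitePresentation R L]
    [Module.FinitePresentation R M] (N : ModuleCat.{u} R) (d : L ⟶ M) (x : S ⊗[R] (M ⟶ N)) :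
    baseChangeHomEquiv S L N ((Linear.leftComp R N d).lTensor S x) =
      (baseChangeFunctor R S).map d ≫ baseChangeHomEquiv S M N x := by
  induction x with
  | zero => simp only [map_zero, Limits.comp_zero]
  | add x y hx hy => simp only [map_add, Preadditive.comp_add, hx, hy]
  | tmul s f =>
    rw [LinearMap.lTensor_tmul, Linear.leftComp_apply, baseChangeHomEquiv_tmul,
      baseChangeHomEquiv_tmul, Linear.comp_smul, Functor.map_comp]

/-- The isomorphism of complexes `S ⊗ Hom(X, N) ≅ Hom(S ⊗ X, S ⊗ N)`, for a complex `X` of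
finitely presented modules and `S` flat. -/
noncomputable def baseChangeLinearYonedaObjIso (X : ChainComplex (ModuleCat.{u} R) ℕ)
    [∀ i, Module.FinitePresentation R (X.X i)] (N : ModuleCat.{u} R) :
    ((baseChangeFunctor R S).mapHomologicalComplex _).obj (X.linearYonedaObj R N) ≅
      ChainComplex.linearYonedaObj (((baseChangeFunctor R S).mapHomologicalComplex _).obj X) S
        ((baseChangeFunctor R S).obj N) :=
  HomologicalComplex.Hom.isoOfComponents
    (fun i ↦ (baseChangeHomEquiv S (X.X i) N).toModuleIso) fun i j _ ↦
      ModuleCat.hom_ext <| LinearMap.ext fun x ↦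
        (baseChangeHomEquiv_lTensor_comp S N (X.d j i) x).symm

end BaseChange

section FGModuleCat

variable {R : Type u} [CommRing R]

lemma fgModuleCat_exists_projective_epi (M : FGModuleCat.{u} R) :
    ∃ (P : FGModuleCat.{u} R) (f : P ⟶ M), Module.Projective R P ∧ Epi f := by
  obtain ⟨n, f, hf⟩ := Module.Finite.exists_fin' R M
  refine ⟨.of R (Fin n → R), FGModuleCat.ofHom f,
    inferInstanceAs (Module.Projective R (Fin n → R)), ?_⟩
  refine (forget₂ (FGModuleCat R) (ModuleCat R)).epi_of_epi_map ?_
  exact (ModuleCat.epi_iff_surjective _).mpr hf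

lemma fgModuleCat_projective_iff (M : FGModuleCat.{u} R) :
    Projective M ↔ Module.Projective R M := by
  let F := forget₂ (FGModuleCat R) (ModuleCat R)
  constructor
  · intro
    obtain ⟨P, f, hP, _⟩ := fgModuleCat_exists_projective_epi M
    have : Projective (F.obj P) := (IsProjective.iff_projective P).mp hP
    let retract : Retract M P := ⟨Projective.factorThru (𝟙 M) f, f, Projective.factorThru_comp _ _⟩
    exact (IsProjective.iff_projective M).mpr (retract.map F).projective
  · intro
    have : Projective (F.obj M) := (IsProjective.iff_projective M).mp ‹_›
    exact ⟨fun {E X} f e _ ↦ ⟨F.preimage (Projective.factorThru (F.map f) (F.map e)),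
      F.map_injective <| by rw [F.map_comp, F.map_preimage, Projective.factorThru_comp]⟩⟩

instance : EnoughProjectives (FGModuleCat.{u} R) where
  presentation M :=
    have ⟨P, f, hP, _⟩ := fgModuleCat_exists_projective_epi M
    ⟨{ p := P, f := f, projective := (fgModuleCat_projective_iff P).mpr hP }⟩

instance : (forget₂ (FGModuleCat.{u} R) (ModuleCat.{u} R)).PreservesProjectiveObjects where
  projective_obj {M} hM :=
    (IsProjective.iff_projective M).mp ((fgModuleCat_projective_iff M).mp hM)

instance [IsNoetherianRing R] {M : FGModuleCat.{u} R} (P : ProjectiveResolution M) (n : ℕ) :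
    Module.FinitePresentation R
      (((forget₂ (FGModuleCat.{u} R) (ModuleCat.{u} R)).mapProjectiveResolution P).complex.X n) :=
  Module.finitePresentation_of_finite R (P.complex.X n)

end FGModuleCat

namespace ExtGroup

variable {R : Type u} [CommRing R]

/-- The isomorphism of Ext groups induced by isomorphisms of the two arguments. -/
noncomputable def congr {M M' N N' : Type u}
    [AddCommGroup M] [Module R M] [AddCommGroup M'] [Module R M']
    [AddCommGroup N] [Module R N] [AddCommGroup N'] [Module R N']
    (e : M ≃ₗ[R] M') (f : N ≃ₗ[R] N') (n : ℕ) : ExtGroup R M N n ≃ₗ[R] ExtGroup R M' N' n :=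
  (((Ext R (ModuleCat.{u} R) n).mapIso e.toModuleIso.symm.op).app _ ≪≫
    ((Ext R (ModuleCat.{u} R) n).obj _).mapIso f.toModuleIso).toLinearEquiv

/-- Flat base change for Ext: `S ⊗ Ext^n_R(M, N) ≅ Ext^n_S(S ⊗ M, S ⊗ N)` for `M` finite over the
Noetherian ring `R`. -/
noncomputable def baseChangeEquiv [IsNoetherianRing R] (S : Type u) [CommRing S] [Algebra R S]
    [Module.Flat R S] (M N : Type u) [AddCommGroup M] [Module R M] [Module.Finite R M]
    [AddCommGroup N] [Module R N] (n : ℕ) :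
    S ⊗[R] ExtGroup R M N n ≃ₗ[S] ExtGroup S (S ⊗[R] M) (S ⊗[R] N) n :=
  -- Resolving `M` in `FGModuleCat R` makes the terms of the resolution finitely presented.
  let P := (forget₂ (FGModuleCat.{u} R) (ModuleCat.{u} R)).mapProjectiveResolution
    (projectiveResolution (FGModuleCat.of R M))
  let K := P.complex.linearYonedaObj R (ModuleCat.of R N)
  ((baseChangeFunctor R S).mapIso (P.isoExt n (ModuleCat.of R N)) ≪≫
    ((K.sc n).mapHomologyIso (baseChangeFunctor R S)).symm ≪≫
    (HomologicalComplex.homologyFunctor _ _ n).mapIso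
      (baseChangeLinearYonedaObjIso S P.complex _) ≪≫
    (((baseChangeFunctor R S).mapProjectiveResolution P).isoExt n _).symm).toLinearEquiv

end ExtGroup

lemma isSimpleModule_of_isSimpleModule_tensorProduct {R M : Type*} (S : Type*) [CommRing R]
    [Ring S] [Algebra R S] [Module.FaithfullyFlat R S] [AddCommGroup M] [Module R M]
    [IsSimpleModule S (S ⊗[R] M)] : IsSimpleModule R M where
  exists_pair_ne := by
    have := IsSimpleModule.nontrivial S (S ⊗[R] M)
    have := (Module.FaithfullyFlat.nontrivial_tensorProduct_iff_right R S).mp this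
    exact exists_pair_ne _
  eq_bot_or_eq_top N := by
    rw [← Submodule.baseChange_inj (A := S) (q := ⊥), ← Submodule.baseChange_inj (A := S) (q := ⊤),
      Submodule.baseChange_bot, Submodule.baseChange_top]
    exact eq_bot_or_eq_top _

lemma isSimpleModule_iff_nonempty_linearEquiv_residueField {R M : Type*} [CommRing R]
    [IsLocalRing R] [AddCommGroup M] [Module R M] :
    IsSimpleModule R M ↔ Nonempty (M ≃ₗ[R] ResidueField R) := by
  rw [isSimpleModule_iff_quot_maximal]
  constructor
  · rintro ⟨I, hI, e⟩
    rwa [eq_maximalIdeal hI] at e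
  · exact fun e ↦ ⟨maximalIdeal R, inferInstance, e⟩

lemma isGorensteinLocalRing_iff_isSimpleModule {R : Type u} [CommRing R] [IsLocalRing R] :
    IsGorensteinLocalRing R ↔ ∃ n : ℕ, ringKrullDim R = n ∧
      (∀ i < n, Subsingleton (ExtGroup R (ResidueField R) R i)) ∧
      IsSimpleModule R (ExtGroup R (ResidueField R) R n) := by
  simp only [IsGorensteinLocalRing, isSimpleModule_iff_nonempty_linearEquiv_residueField]
  exact exists_congr fun n ↦ and_congr_right fun _ ↦ and_congr_right fun _ ↦
    ⟨fun ⟨e⟩ ↦ ⟨e.toLinearEquiv⟩, fun ⟨e⟩ ↦ ⟨e.toModuleIso⟩⟩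

lemma isLocalHom_of_map_maximalIdeal_eq {R S : Type*} [CommRing R] [IsLocalRing R] [CommRing S]
    [IsLocalRing S] {f : R →+* S} (hm : (maximalIdeal R).map f = maximalIdeal S) :
    IsLocalHom f :=
  ((local_hom_TFAE f).out 0 2).mpr hm.le

section MapMaximalIdeal

variable {R S : Type*} [CommRing R] [IsLocalRing R] [CommRing S] [IsLocalRing S] [Algebra R S]

/-- The isomorphism `S ⊗ κ(R) ≅ κ(S)`, for a map of local rings with `𝔪_R S = 𝔪_S`. -/
noncomputable def tensorResidueFieldEquiv
    (hm : (maximalIdeal R).map (algebraMap R S) = maximalIdeal S) :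
    S ⊗[R] ResidueField R ≃ₗ[S] ResidueField S :=
  ((maximalIdeal R).qoutMapEquivTensorQout S).symm ≪≫ₗ Submodule.quotEquivOfEq _ _ hm

lemma isSimpleModule_tensorProduct_iff_of_map_maximalIdeal_eq [Module.FaithfullyFlat R S]
    {M : Type*} [AddCommGroup M] [Module R M]
    (hm : (maximalIdeal R).map (algebraMap R S) = maximalIdeal S) :
    IsSimpleModule S (S ⊗[R] M) ↔ IsSimpleModule R M := by
  refine ⟨fun _ ↦ isSimpleModule_of_isSimpleModule_tensorProduct S, fun h ↦ ?_⟩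
  rw [isSimpleModule_iff_nonempty_linearEquiv_residueField] at h ⊢
  exact h.map fun e ↦ e.baseChange R S _ _ ≪≫ₗ tensorResidueFieldEquiv hm

lemma ringKrullDim_eq_of_map_maximalIdeal_eq [IsNoetherianRing R] [IsNoetherianRing S]
    [Module.Flat R S] (hm : (maximalIdeal R).map (algebraMap R S) = maximalIdeal S) :
    ringKrullDim R = ringKrullDim S := by
  have := isLocalHom_of_map_maximalIdeal_eq hm
  have : Nontrivial (S ⧸ (maximalIdeal R).map (algebraMap R S)) :=
    Ideal.Quotient.nontrivial_iff.mpr (hm ▸ Ideal.IsPrime.ne_top')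
  rw [← maximalIdeal_height_eq_ringKrullDim, ← maximalIdeal_height_eq_ringKrullDim,
    Ideal.height_eq_height_add_of_liesOver_of_hasGoingDown (maximalIdeal R) (maximalIdeal S),
    ← hm, Ideal.map_quotient_self, Ideal.height_bot, add_zero]

end MapMaximalIdeal

section Gorenstein

variable {R S : Type u} [CommRing R] [IsLocalRing R] [IsNoetherianRing R]
  [CommRing S] [IsLocalRing S] [Algebra R S] [Module.Flat R S]

/-- The isomorphism `S ⊗ Ext^n_R(κ(R), R) ≅ Ext^n_S(κ(S), S)`, for a flat map of local rings with
`𝔪_R S = 𝔪_S`. -/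
noncomputable def ExtGroup.residueFieldBaseChangeEquiv
    (hm : (maximalIdeal R).map (algebraMap R S) = maximalIdeal S) (n : ℕ) :
    S ⊗[R] ExtGroup R (ResidueField R) R n ≃ₗ[S] ExtGroup S (ResidueField S) S n :=
  baseChangeEquiv S (ResidueField R) R n ≪≫ₗ
    congr (tensorResidueFieldEquiv hm) (TensorProduct.AlgebraTensorModule.rid R S S) n

theorem isGorensteinLocalRing_iff_of_map_maximalIdeal_eq [IsNoetherianRing S]
    (hm : (maximalIdeal R).map (algebraMap R S) = maximalIdeal S) :
    IsGorensteinLocalRing R ↔ IsGorensteinLocalRing S := by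
  have := isLocalHom_of_map_maximalIdeal_eq hm
  have : Module.FaithfullyFlat R S := .of_flat_of_isLocalHom
  have hext (i : ℕ) := ExtGroup.residueFieldBaseChangeEquiv hm i
  have hsub (i : ℕ) : Subsingleton (ExtGroup R (ResidueField R) R i) ↔
      Subsingleton (ExtGroup S (ResidueField S) S i) := by
    rw [← (hext i).toEquiv.subsingleton_congr,
      Module.FaithfullyFlat.subsingleton_tensorProduct_iff_right]
  have hsimple (i : ℕ) : IsSimpleModule R (ExtGroup R (ResidueField R) R i) ↔
      IsSimpleModule S (ExtGroup S (ResidueField S) S i) := by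
    rw [← (hext i).isSimpleModule_iff,
      isSimpleModule_tensorProduct_iff_of_map_maximalIdeal_eq hm]
  simp only [isGorensteinLocalRing_iff_isSimpleModule, ringKrullDim_eq_of_map_maximalIdeal_eq hm,
    hsub, hsimple]

end Gorenstein

lemma map_maximalIdeal_localization_of_map_eq {B A : Type*} [CommRing B] [CommRing A]
    [Algebra B A] (q : Ideal B) (p : Ideal A) [q.IsPrime] [p.IsPrime] [p.LiesOver q]
    [Algebra (Localization.AtPrime q) (Localization.AtPrime p)]
    [Localization.AtPrime.IsLiesOverAlgebra q p]
    (hq : q.map (algebraMap B (Localization.AtPrime p)) = maximalIdeal (Localization.AtPrime p)) :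
    (maximalIdeal (Localization.AtPrime q)).map (algebraMap _ (Localization.AtPrime p)) =
      maximalIdeal (Localization.AtPrime p) := by
  rw [← Localization.AtPrime.map_eq_maximalIdeal, Ideal.map_map, ← IsScalarTower.algebraMap_eq, hq]

lemma map_comap_eq_maximalIdeal_of_formallyUnramified {B A : Type*} [CommRing B] [CommRing A]
    [Algebra B A] [Algebra.EssFiniteType B A] [Algebra.FormallyUnramified B A]
    (p : PrimeSpectrum A) :
    (PrimeSpectrum.comap (algebraMap B A) p).asIdeal.map
      (algebraMap B (Localization.AtPrime p.asIdeal)) = maximalIdeal _ := by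
  let q := PrimeSpectrum.comap (algebraMap B A) p
  have : p.asIdeal.LiesOver q.asIdeal := ⟨rfl⟩
  let := Localization.AtPrime.algebraOfLiesOver q.asIdeal p.asIdeal
  have : Algebra.IsUnramifiedAt B p.asIdeal := Algebra.FormallyUnramified.comp B A _
  exact ((Algebra.isUnramifiedAt_iff_map_eq B q.asIdeal p.asIdeal).mp this).2

/-- The hypothesis `hfiber` says that the local rings of the fibers of `Spec A → Spec B` are
fields. -/
theorem gorensteinInCodim_iff_of_etale_general
    {B A : Type u} [CommRing B] [CommRing A] [IsNoetherianRing B] [IsNoetherianRing A]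
    [Algebra B A] [Module.Flat B A]
    (hfiber : ∀ p : PrimeSpectrum A, (PrimeSpectrum.comap (algebraMap B A) p).asIdeal.map
      (algebraMap B (Localization.AtPrime p.asIdeal)) = maximalIdeal _)
    (hsurj : Function.Surjective (PrimeSpectrum.comap (algebraMap B A))) (r : ℕ) :
    GorensteinInCodim B r ↔ GorensteinInCodim A r := by
  rw [GorensteinInCodim, GorensteinInCodim, hsurj.forall]
  refine forall_congr' fun p ↦ ?_
  let q := PrimeSpectrum.comap (algebraMap B A) p
  have : p.asIdeal.LiesOver q.asIdeal := ⟨rfl⟩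
  let := Localization.AtPrime.algebraOfLiesOver q.asIdeal p.asIdeal
  have hm := map_maximalIdeal_localization_of_map_eq q.asIdeal p.asIdeal (hfiber p)
  rw [ringKrullDim_eq_of_map_maximalIdeal_eq hm,
    isGorensteinLocalRing_iff_of_map_maximalIdeal_eq hm]

/-- For an étale ring homomorphism of Noetherian rings that is surjective on prime
spectra, the source is Gorenstein in codimension `r` iff the target is. -/
theorem gorensteinInCodim_iff_of_etale
    (B A : Type u) [CommRing B] [CommRing A] [IsNoetherianRing B] [IsNoetherianRing A]
    [Algebra B A] [Algebra.Etale B A]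
    (hsurj : Function.Surjective (PrimeSpectrum.comap (algebraMap B A)))
    (r : ℕ) :
    GorensteinInCodim B r ↔ GorensteinInCodim A r := by
  exact gorensteinInCodim_iff_of_etale_general
    map_comap_eq_maximalIdeal_of_formallyUnramified hsurj r
end
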